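/- arXiv:2605.18051 — 6 statements merged into one kernel-verified Lean document; each statement's English description precedes it below -/
import Mathlib

section
/- Let f : ℝ → ℝ be twice continuously differentiable on (0,∞) with f''(x) > 0 for all x > 0 and f(1) = 0, and define d_f(s) = ((1-s)/2)·f((1+s)/(1-s)) + ((1+s)/2)·f((1-s)/(1+s)) for s ∈ [0,1). Then d_f is strictly monotonically increasing on [0,1): for all s, t with 0 ≤ s < t < 1, d_f(s) < d_f(t). -/
/-- The binary symmetric f-divergence. -/
noncomputable def binDiv (f : ℝ → ℝ) (s : ℝ) : ℝ :=
  ((1 - s) / 2) * f ((1 + s) / (1 - s)) + ((1 + s) / 2) * f ((1 - s) / (1 + s))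

theorem persp_lt (f : ℝ → ℝ) (hc : StrictConvexOn ℝ (Set.Ioi 0) f) (s t : ℝ)
    (h1 : -t < s) (h2 : s < t) (ht : t < 1) :
    (1 - s) / 2 * f ((1 + s) / (1 - s)) <
      (t + s) / (2 * t) * ((1 - t) / 2 * f ((1 + t) / (1 - t))) +
      (t - s) / (2 * t) * ((1 + t) / 2 * f ((1 - t) / (1 + t))) := by
  have ht0 : 0 < t := by linarith
  have a1 : 0 < 1 - t := by linarith
  have a2 : 0 < 1 + t := by linarith
  have a3 : 0 < 1 - s := by linarith
  have a4 : 0 < t + s := by linarith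
  have a5 : 0 < t - s := by linarith
  have hne : (1 + t) / (1 - t) ≠ (1 - t) / (1 + t) := by
    intro h
    rw [div_eq_div_iff a1.ne' a2.ne'] at h
    nlinarith
  have hx : (1 + t) / (1 - t) ∈ Set.Ioi (0 : ℝ) := by
    simp only [Set.mem_Ioi]; positivity
  have hy : (1 - t) / (1 + t) ∈ Set.Ioi (0 : ℝ) := by
    simp only [Set.mem_Ioi]; positivity
  have ha : 0 < (t + s) / (2 * t) * (1 - t) / (1 - s) := by positivity
  have hb : 0 < (t - s) / (2 * t) * (1 + t) / (1 - s) := by positivity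
  have hab : (t + s) / (2 * t) * (1 - t) / (1 - s) +
      (t - s) / (2 * t) * (1 + t) / (1 - s) = 1 := by
    field_simp
    ring
  have key := hc.2 hx hy hne ha hb hab
  simp only [smul_eq_mul] at key
  have e : (t + s) / (2 * t) * (1 - t) / (1 - s) * ((1 + t) / (1 - t)) +
      (t - s) / (2 * t) * (1 + t) / (1 - s) * ((1 - t) / (1 + t)) = (1 + s) / (1 - s) := by
    field_simp
    ring
  rw [e] at key
  have := mul_lt_mul_of_pos_left key (show 0 < (1 - s) / 2 by positivity)
  refine this.trans_eq ?_
  field_simp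

theorem binDiv_strictMono (f : ℝ → ℝ)
    (hf : ContDiffOn ℝ 2 f (Set.Ioi 0))
    (hf'' : ∀ x : ℝ, 0 < x → 0 < deriv (deriv f) x)
    (hf1 : f 1 = 0) :
    ∀ s t : ℝ, 0 ≤ s → s < t → t < 1 → binDiv f s < binDiv f t := by
  have hc : StrictConvexOn ℝ (Set.Ioi 0) f := by
    apply strictConvexOn_of_deriv2_pos (convex_Ioi 0) hf.continuousOn
    intro x hx
    rw [interior_Ioi] at hx
    exact hf'' x hx
  intro s t hs hst ht
  have p := persp_lt f hc s t (by linarith) hst ht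
  have q := persp_lt f hc (-s) t (by linarith) (by linarith) ht
  simp only [sub_neg_eq_add, ← sub_eq_add_neg] at q
  unfold binDiv
  have e : (t + s) / (2 * t) = 1 - (t - s) / (2 * t) := by
    have : t ≠ 0 := by linarith
    field_simp
    ring
  rw [e] at p q
  linarith
end

section
/- Let f : ℝ → ℝ be twice continuously differentiable on (0,∞) with f''(x) > 0 for all x > 0 and f(1) = 0, and define d_f(s) = ((1-s)/2)·f((1+s)/(1-s)) + ((1+s)/2)·f((1-s)/(1+s)) for s ∈ [0,1). Then for every s ∈ (0,1) the second derivative of d_f at s equals (2/(1-s)^3)·f''((1+s)/(1-s)) + (2/(1+s)^3)·f''((1-s)/(1+s)) and is strictly positive; consequently d_f is strictly convex on [0,1). -/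
theorem binDiv_aux_u (s : ℝ) (h2 : s < 1) :
    HasDerivAt (fun s : ℝ => (1 + s) / (1 - s)) (2 / (1 - s) ^ 2) s := by
  have h : (1 - s) ≠ 0 := by linarith
  have := ((hasDerivAt_id s).const_add 1).div ((hasDerivAt_id s).const_sub 1) h
  refine this.congr_deriv ?_
  simp only [id]
  congr 1
  ring

theorem binDiv_aux_v (s : ℝ) (h1 : -1 < s) :
    HasDerivAt (fun s : ℝ => (1 - s) / (1 + s)) (-2 / (1 + s) ^ 2) s := by
  have h : (1 + s) ≠ 0 := by linarith
  have := ((hasDerivAt_id s).const_sub 1).div ((hasDerivAt_id s).const_add 1) h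
  refine this.congr_deriv ?_
  simp only [id]
  congr 1
  ring

theorem binDiv_aux_d1 (f : ℝ → ℝ) (hd : ∀ x : ℝ, 0 < x → HasDerivAt f (deriv f x) x)
    (s : ℝ) (h1 : -1 < s) (h2 : s < 1) :
    HasDerivAt (binDiv f) (-f ((1 + s) / (1 - s)) / 2 + deriv f ((1 + s) / (1 - s)) / (1 - s)
      + (f ((1 - s) / (1 + s)) / 2 - deriv f ((1 - s) / (1 + s)) / (1 + s))) s := by
  have p : 0 < 1 - s := by linarith
  have q : 0 < 1 + s := by linarith
  have A := HasDerivAt.comp (h := fun s : ℝ => (1 + s) / (1 - s)) s (hd _ (div_pos q p)) (binDiv_aux_u s h2)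
  have B := HasDerivAt.comp (h := fun s : ℝ => (1 - s) / (1 + s)) s (hd _ (div_pos p q)) (binDiv_aux_v s h1)
  have := ((((hasDerivAt_id s).const_sub 1).div_const 2).mul A).add
    ((((hasDerivAt_id s).const_add 1).div_const 2).mul B)
  refine HasDerivAt.congr_deriv (f := binDiv f) this ?_
  simp only [id, Function.comp]
  generalize f ((1 + s) / (1 - s)) = a
  generalize f ((1 - s) / (1 + s)) = b
  generalize deriv f ((1 + s) / (1 - s)) = c
  generalize deriv f ((1 - s) / (1 + s)) = d
  field_simp
  ring

theorem binDiv_aux_d2 (f : ℝ → ℝ) (hd : ∀ x : ℝ, 0 < x → HasDerivAt f (deriv f x) x)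
    (hd2 : ∀ x : ℝ, 0 < x → HasDerivAt (deriv f) (deriv (deriv f) x) x)
    (s : ℝ) (h1 : -1 < s) (h2 : s < 1) :
    HasDerivAt (deriv (binDiv f)) (2 / (1 - s) ^ 3 * deriv (deriv f) ((1 + s) / (1 - s)) +
            2 / (1 + s) ^ 3 * deriv (deriv f) ((1 - s) / (1 + s))) s := by
  have p : 0 < 1 - s := by linarith
  have q : 0 < 1 + s := by linarith
  have A := HasDerivAt.comp (h := fun s : ℝ => (1 + s) / (1 - s)) s (hd _ (div_pos q p)) (binDiv_aux_u s h2)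
  have B := HasDerivAt.comp (h := fun s : ℝ => (1 - s) / (1 + s)) s (hd _ (div_pos p q)) (binDiv_aux_v s h1)
  have A2 := HasDerivAt.comp (h := fun s : ℝ => (1 + s) / (1 - s)) s (hd2 _ (div_pos q p)) (binDiv_aux_u s h2)
  have B2 := HasDerivAt.comp (h := fun s : ℝ => (1 - s) / (1 + s)) s (hd2 _ (div_pos p q)) (binDiv_aux_v s h1)
  have := ((A.neg.div_const 2).add (A2.div ((hasDerivAt_id s).const_sub 1) p.ne')).add
    ((B.div_const 2).sub (B2.div ((hasDerivAt_id s).const_add 1) q.ne'))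
  have key := this.congr_of_eventuallyEq (f₁ := deriv (binDiv f)) (by
    filter_upwards [Ioo_mem_nhds h1 h2] with t ht
    exact (binDiv_aux_d1 f hd t ht.1 ht.2).deriv)
  refine key.congr_deriv ?_
  simp only [id, Function.comp]
  generalize deriv (deriv f) ((1 + s) / (1 - s)) = a
  generalize deriv (deriv f) ((1 - s) / (1 + s)) = b
  generalize deriv f ((1 + s) / (1 - s)) = c
  generalize deriv f ((1 - s) / (1 + s)) = d
  field_simp
  ring

theorem binDiv_second_deriv_and_strictConvex (f : ℝ → ℝ)
    (hf : ContDiffOn ℝ 2 f (Set.Ioi 0))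
    (hf'' : ∀ x : ℝ, 0 < x → 0 < deriv (deriv f) x)
    (hf1 : f 1 = 0) :
    (∀ s : ℝ, 0 < s → s < 1 →
      deriv (deriv (binDiv f)) s =
          2 / (1 - s) ^ 3 * deriv (deriv f) ((1 + s) / (1 - s)) +
            2 / (1 + s) ^ 3 * deriv (deriv f) ((1 - s) / (1 + s)) ∧
        0 < deriv (deriv (binDiv f)) s) ∧
    StrictConvexOn ℝ (Set.Ico (0 : ℝ) 1) (binDiv f) := by
  have hC : ∀ x : ℝ, 0 < x → ContDiffAt ℝ 2 f x := fun x hx =>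
    hf.contDiffAt (Ioi_mem_nhds hx)
  have hd : ∀ x : ℝ, 0 < x → HasDerivAt f (deriv f x) x := fun x hx =>
    ((hC x hx).differentiableAt (by norm_num)).hasDerivAt
  have hd2 : ∀ x : ℝ, 0 < x → HasDerivAt (deriv f) (deriv (deriv f) x) x := fun x hx =>
    (differentiableAt_of_deriv_ne_zero (hf'' x hx).ne').hasDerivAt
  have main : ∀ s : ℝ, 0 < s → s < 1 →
      deriv (deriv (binDiv f)) s =
          2 / (1 - s) ^ 3 * deriv (deriv f) ((1 + s) / (1 - s)) +
            2 / (1 + s) ^ 3 * deriv (deriv f) ((1 - s) / (1 + s)) ∧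
        0 < deriv (deriv (binDiv f)) s := by
    intro s h0 h1
    have e := (binDiv_aux_d2 f hd hd2 s (by linarith) h1).deriv
    refine ⟨e, ?_⟩
    rw [e]
    have p : 0 < 1 - s := by linarith
    have q : 0 < 1 + s := by linarith
    have := hf'' _ (div_pos q p)
    have := hf'' _ (div_pos p q)
    positivity
  refine ⟨main, strictConvexOn_of_deriv2_pos (convex_Ico 0 1) ?_ ?_⟩
  · intro s hs
    exact (binDiv_aux_d1 f hd s (by linarith [hs.1]) hs.2).continuousAt.continuousWithinAt
  · intro s hs
    rw [interior_Ico] at hs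
    exact (main s hs.1 hs.2).2
end

section
/- Let f : ℝ → ℝ be twice continuously differentiable on (0,∞) with f''(x) > 0 for all x > 0 and f(1) = 0. Let (Ω, μ) be a measure space and p, q : Ω → ℝ measurable with p(ω) > 0 and q(ω) > 0 for all ω, ∫ p dμ = 1 and ∫ q dμ = 1. Assume the integrand (1/2)·(q·f(p/q) + p·f(q/p)) is μ-integrable, set D̃_f = (1/2)∫ (q·f(p/q) + p·f(q/p)) dμ and t = (1/2)∫ |p - q| dμ, and assume t < 1. Then D̃_f ≥ d_f(t), where d_f(s) = ((1-s)/2)·f((1+s)/(1-s)) + ((1+s)/2)·f((1-s)/(1+s)). -/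
open MeasureTheory

lemma tangent_perspective (f : ℝ → ℝ)
    (hf : ContDiffOn ℝ 2 f (Set.Ioi 0))
    (hf'' : ∀ x : ℝ, 0 < x → 0 < deriv (deriv f) x) (a : ℝ) (ha : 0 < a) :
    ∃ c : ℝ, ∀ u v : ℝ, 0 < u → 0 < v → v * f a + c * (u - a * v) ≤ v * f (u / v) := by
  have hconv : ConvexOn ℝ (Set.Ioi 0) f :=
    (strictConvexOn_of_deriv2_pos' (convex_Ioi 0) hf.continuousOn
      (fun x hx => hf'' x hx)).convexOn
  have hd : DifferentiableAt ℝ f a :=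
    (hf.contDiffAt (Ioi_mem_nhds ha)).differentiableAt (by norm_num)
  have key : ∀ x : ℝ, 0 < x → f a + deriv f a * (x - a) ≤ f x := by
    intro x hx
    rcases lt_trichotomy a x with h | h | h
    · have := hconv.deriv_le_slope (Set.mem_Ioi.2 ha) (Set.mem_Ioi.2 hx) h hd
      rw [slope_def_field, le_div_iff₀ (by linarith)] at this
      linarith
    · subst h; simp
    · have := hconv.slope_le_deriv (Set.mem_Ioi.2 hx) (Set.mem_Ioi.2 ha) h hd
      rw [slope_def_field, div_le_iff₀ (by linarith)] at this
      linarith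
  refine ⟨deriv f a, fun u v hu hv => ?_⟩
  have h := mul_le_mul_of_nonneg_left (key (u / v) (div_pos hu hv)) hv.le
  have e : v * (f a + deriv f a * (u / v - a)) = v * f a + deriv f a * (u - a * v) := by
    field_simp
  linarith

theorem sym_fdiv_ge_binDiv_tv {Ω : Type*} [MeasurableSpace Ω] (μ : Measure Ω)
    (f : ℝ → ℝ)
    (hf : ContDiffOn ℝ 2 f (Set.Ioi 0))
    (hf'' : ∀ x : ℝ, 0 < x → 0 < deriv (deriv f) x)
    (hf1 : f 1 = 0)
    (p q : Ω → ℝ) (hp : Measurable p) (hq : Measurable q)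
    (hppos : ∀ ω, 0 < p ω) (hqpos : ∀ ω, 0 < q ω)
    (hpint : ∫ ω, p ω ∂μ = 1) (hqint : ∫ ω, q ω ∂μ = 1)
    (hint : Integrable
      (fun ω => (1 / 2) * (q ω * f (p ω / q ω) + p ω * f (q ω / p ω))) μ)
    (ht : (1 / 2) * ∫ ω, |p ω - q ω| ∂μ < 1) :
    binDiv f ((1 / 2) * ∫ ω, |p ω - q ω| ∂μ) ≤
      (1 / 2) * ∫ ω, (q ω * f (p ω / q ω) + p ω * f (q ω / p ω)) ∂μ := by
  set t := (1 / 2) * ∫ ω, |p ω - q ω| ∂μ with htdef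
  have ht0 : 0 ≤ t := mul_nonneg (by norm_num) (integral_nonneg fun ω => abs_nonneg _)
  have h1 : 0 < 1 - t := by linarith
  have h2 : 0 < 1 + t := by linarith
  obtain ⟨c, hc⟩ := tangent_perspective f hf hf'' ((1 + t) / (1 - t)) (div_pos h2 h1)
  obtain ⟨d, hd⟩ := tangent_perspective f hf hf'' ((1 - t) / (1 + t)) (div_pos h1 h2)
  unfold binDiv
  generalize hA : f ((1 + t) / (1 - t)) = A at hc ⊢
  generalize hB : f ((1 - t) / (1 + t)) = B at hd ⊢
  obtain ⟨a, hadef⟩ : ∃ a, a = (1 + t) / (1 - t) := ⟨_, rfl⟩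
  obtain ⟨b, hbdef⟩ : ∃ b, b = (1 - t) / (1 + t) := ⟨_, rfl⟩
  rw [← hadef] at hc
  rw [← hbdef] at hd
  have ha : a * (1 - t) = 1 + t := by rw [hadef]; field_simp
  have hb : b * (1 + t) = 1 - t := by rw [hbdef]; field_simp
  have ip : Integrable p μ := by
    by_contra h; rw [integral_undef h] at hpint; norm_num at hpint
  have iq : Integrable q μ := by
    by_contra h; rw [integral_undef h] at hqint; norm_num at hqint
  have iabs : Integrable (fun ω => |p ω - q ω|) μ := (ip.sub iq).abs
  have iF : Integrable (fun ω => q ω * f (p ω / q ω) + p ω * f (q ω / p ω)) μ := by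
    have := hint.const_mul 2
    refine this.congr (Filter.Eventually.of_forall fun ω => ?_)
    ring
  have hpt : ∀ ω, (A - a * c + d) / 2 * (p ω + q ω - |p ω - q ω|)
      + (c + B - b * d) / 2 * (p ω + q ω + |p ω - q ω|)
      ≤ q ω * f (p ω / q ω) + p ω * f (q ω / p ω) := by
    intro ω
    rcases le_total (q ω) (p ω) with h | h
    · rw [abs_of_nonneg (by linarith)]
      linarith [hc (p ω) (q ω) (hppos ω) (hqpos ω), hd (q ω) (p ω) (hqpos ω) (hppos ω)]
    · rw [abs_of_nonpos (by linarith)]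
      linarith [hc (q ω) (p ω) (hqpos ω) (hppos ω), hd (p ω) (q ω) (hppos ω) (hqpos ω)]
  have iS : Integrable (fun ω => p ω + q ω) μ := ip.add iq
  have i1 : Integrable (fun ω => (A - a * c + d) / 2 * (p ω + q ω - |p ω - q ω|)) μ :=
    (iS.sub iabs).const_mul _
  have i2 : Integrable (fun ω => (c + B - b * d) / 2 * (p ω + q ω + |p ω - q ω|)) μ :=
    (iS.add iabs).const_mul _
  have hmono := integral_mono (i1.add i2) iF hpt
  have habs : ∫ ω, |p ω - q ω| ∂μ = 2 * t := by rw [htdef]; ring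
  have e : ∫ ω, ((fun ω => (A - a * c + d) / 2 * (p ω + q ω - |p ω - q ω|))
      + (fun ω => (c + B - b * d) / 2 * (p ω + q ω + |p ω - q ω|))) ω ∂μ
      = (1 - t) * A + (1 + t) * B := by
    rw [integral_add' i1 i2, integral_const_mul, integral_const_mul, integral_sub iS iabs,
      integral_add iS iabs, integral_add ip iq, hpint, hqint, habs]
    linear_combination (-c) * ha + (-d) * hb
  rw [e] at hmono
  linarith
end

section
/- Let f : ℝ → ℝ be twice continuously differentiable on (0,∞) with f''(x) > 0 for all x > 0 and f(1) = 0, with d_f(s) = ((1-s)/2)·f((1+s)/(1-s)) + ((1+s)/2)·f((1-s)/(1+s)). Let (Ω, μ) be a measure space, p, q : Ω → ℝ measurable with p, q > 0 everywhere and ∫ p dμ = ∫ q dμ = 1, assume the symmetric f-divergence integrand is μ-integrable with D̃_f = (1/2)∫ (q·f(p/q) + p·f(q/p)) dμ, and assume (1/2)∫|p−q| dμ < 1. Let X : Ω → ℝ be measurable with 0 ≤ X ≤ M for some M > 0, with X·p and X·q μ-integrable. Then d_f( |∫ X·p dμ − ∫ X·q dμ| / M ) ≤ D̃_f. -/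
open MeasureTheory

theorem support_line (f : ℝ → ℝ)
    (hf : ContDiffOn ℝ 2 f (Set.Ioi 0))
    (hf'' : ∀ x : ℝ, 0 < x → 0 < deriv (deriv f) x) (x y : ℝ) (hx : 0 < x) (hy : 0 < y) :
    f x + deriv f x * (y - x) ≤ f y := by
  have hd : DifferentiableOn ℝ f (Set.Ioi 0) := hf.differentiableOn (by norm_num)
  have hd2 : DifferentiableOn ℝ (deriv f) (Set.Ioi 0) := by
    intro z hz
    by_contra h
    have h2 : ¬ DifferentiableAt ℝ (deriv f) z := fun h' => h h'.differentiableWithinAt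
    have := hf'' z hz
    rw [deriv_zero_of_not_differentiableAt h2] at this
    exact lt_irrefl _ this
  have hc : ConvexOn ℝ (Set.Ioi 0) f := by
    apply convexOn_of_deriv2_nonneg (convex_Ioi 0) hd.continuousOn
    · rwa [interior_Ioi]
    · rwa [interior_Ioi]
    · intro z hz
      rw [interior_Ioi] at hz
      exact (hf'' z hz).le
  have hda : HasDerivAt f (deriv f x) x :=
    ((hd x hx).differentiableAt (Ioi_mem_nhds hx)).hasDerivAt
  rcases lt_trichotomy x y with h | h | h
  · have := hc.le_slope_of_hasDerivAt hx hy h hda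
    rw [slope_def_field, le_div_iff₀ (by linarith)] at this
    linarith
  · subst h; simp
  · have := hc.slope_le_of_hasDerivAt hy hx h hda
    rw [slope_def_field, div_le_iff₀ (by linarith)] at this
    linarith

theorem persp_line (f : ℝ → ℝ) (a x P Q : ℝ) (_hP : 0 < P) (hQ : 0 < Q)
    (h : f x + a * (P / Q - x) ≤ f (P / Q)) :
    Q * (f x - a * x) + a * P ≤ Q * f (P / Q) := by
  have h1 := mul_le_mul_of_nonneg_left h hQ.le
  have h2 : Q * (f x + a * (P / Q - x)) = Q * (f x - a * x) + a * P := by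
    field_simp
    ring
  linarith

theorem binDiv_expectation_diff_le_sym_fdiv {Ω : Type*} [MeasurableSpace Ω]
    (μ : Measure Ω) (f : ℝ → ℝ)
    (hf : ContDiffOn ℝ 2 f (Set.Ioi 0))
    (hf'' : ∀ x : ℝ, 0 < x → 0 < deriv (deriv f) x)
    (hf1 : f 1 = 0)
    (p q : Ω → ℝ) (hp : Measurable p) (hq : Measurable q)
    (hppos : ∀ ω, 0 < p ω) (hqpos : ∀ ω, 0 < q ω)
    (hpint : ∫ ω, p ω ∂μ = 1) (hqint : ∫ ω, q ω ∂μ = 1)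
    (hint : Integrable
      (fun ω => (1 / 2) * (q ω * f (p ω / q ω) + p ω * f (q ω / p ω))) μ)
    (htv : (1 / 2) * ∫ ω, |p ω - q ω| ∂μ < 1)
    (X : Ω → ℝ) (hX : Measurable X)
    (M : ℝ) (hM : 0 < M) (hX0 : ∀ ω, 0 ≤ X ω) (hXM : ∀ ω, X ω ≤ M)
    (hXp : Integrable (fun ω => X ω * p ω) μ)
    (hXq : Integrable (fun ω => X ω * q ω) μ) :
    binDiv f (|(∫ ω, X ω * p ω ∂μ) - ∫ ω, X ω * q ω ∂μ| / M) ≤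
      (1 / 2) * ∫ ω, (q ω * f (p ω / q ω) + p ω * f (q ω / p ω)) ∂μ := by
  have hpi : Integrable p μ := by
    by_contra h
    rw [integral_undef h] at hpint
    norm_num at hpint
  have hqi : Integrable q μ := by
    by_contra h
    rw [integral_undef h] at hqint
    norm_num at hqint
  have hai : Integrable (fun ω => |p ω - q ω|) μ := (hpi.sub hqi).abs
  have hXd : Integrable (fun ω => X ω * p ω - X ω * q ω) μ := hXp.sub hXq
  have hpd : Integrable (fun ω => (M / 2) * (p ω - q ω)) μ := (hpi.sub hqi).const_mul _
  set T := ∫ ω, |p ω - q ω| ∂μ with hT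
  set s := |(∫ ω, X ω * p ω ∂μ) - ∫ ω, X ω * q ω ∂μ| / M with hs
  have hs0 : 0 ≤ s := by positivity
  have hsT : s ≤ (1 / 2) * T := by
    have e : (∫ ω, X ω * p ω ∂μ) - ∫ ω, X ω * q ω ∂μ
        = ∫ ω, ((X ω * p ω - X ω * q ω) - (M / 2) * (p ω - q ω)) ∂μ := by
      rw [integral_sub hXd hpd, integral_sub hXp hXq,
        integral_const_mul, integral_sub hpi hqi, hpint, hqint]
      ring
    have b : |(∫ ω, X ω * p ω ∂μ) - ∫ ω, X ω * q ω ∂μ| ≤ ∫ ω, (M / 2) * |p ω - q ω| ∂μ := by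
      rw [e]
      refine (abs_integral_le_integral_abs).trans ?_
      refine integral_mono (hXd.sub hpd).abs
        (hai.const_mul _) ?_
      intro ω
      have e2 : (X ω * p ω - X ω * q ω) - (M / 2) * (p ω - q ω)
        = (X ω - M / 2) * (p ω - q ω) := by ring
      show |(X ω * p ω - X ω * q ω) - (M / 2) * (p ω - q ω)| ≤ (M / 2) * |p ω - q ω|
      rw [e2, abs_mul]
      refine mul_le_mul_of_nonneg_right ?_ (abs_nonneg _)
      rw [abs_le]
      constructor <;> linarith [hX0 ω, hXM ω]
    rw [integral_const_mul] at b
    rw [hs, div_le_iff₀ hM]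
    linarith
  have hs1 : s < 1 := by linarith
  have hx0 : 0 < (1 + s) / (1 - s) := div_pos (by linarith) (by linarith)
  have hy0 : 0 < (1 - s) / (1 + s) := div_pos (by linarith) (by linarith)
  have hxe : (1 + s) / (1 - s) * (1 - s) = 1 + s := div_mul_cancel₀ _ (by linarith)
  have hye : (1 - s) / (1 + s) * (1 + s) = 1 - s := div_mul_cancel₀ _ (by linarith)
  unfold binDiv
  set x := (1 + s) / (1 - s) with hx
  set y := (1 - s) / (1 + s) with hy
  have hx1 : 1 ≤ x := by rw [hx, le_div_iff₀ (by linarith)]; linarith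
  have hy1 : y ≤ 1 := by rw [hy, div_le_iff₀ (by linarith)]; linarith
  have S := support_line f hf hf''
  have hab : deriv f y ≤ deriv f x := by
    rcases (hy1.trans hx1).eq_or_lt with h | h
    · rw [h]
    · have h1 := S x y hx0 hy0
      have h2 := S y x hy0 hx0
      by_contra hc
      push Not at hc
      nlinarith
  have hxy := S x y hx0 hy0
  have Sx := fun z hz => S x z hx0 hz
  have Sy := fun z hz => S y z hy0 hz
  generalize deriv f x = a at *
  generalize deriv f y = b at *
  obtain ⟨A, hA⟩ : ∃ A, A = f x - a * x + b := ⟨_, rfl⟩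
  obtain ⟨B, hB⟩ : ∃ B, B = f y - b * y + a := ⟨_, rfl⟩
  have hBA : A ≤ B := by nlinarith
  have key : ∀ P Q : ℝ, 0 < P → 0 < Q → Q * A + P * B ≤ Q * f (P / Q) + P * f (Q / P) := by
    intro P Q hP hQ
    have h1 := persp_line f a x P Q hP hQ (Sx _ (div_pos hP hQ))
    have h2 := persp_line f b y Q P hQ hP (Sy _ (div_pos hQ hP))
    rw [hA, hB]
    linarith
  have key2 : ∀ ω, (A + B) / 2 * (p ω + q ω) + (B - A) / 2 * |p ω - q ω|
      ≤ q ω * f (p ω / q ω) + p ω * f (q ω / p ω) := by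
    intro ω
    rcases le_total (q ω) (p ω) with h | h
    · rw [abs_of_nonneg (by linarith)]
      linarith [key _ _ (hppos ω) (hqpos ω)]
    · rw [abs_of_nonpos (by linarith)]
      linarith [key _ _ (hqpos ω) (hppos ω)]
  have hint2 : Integrable (fun ω => q ω * f (p ω / q ω) + p ω * f (q ω / p ω)) μ := by
    have := hint.const_mul 2
    refine this.congr (Filter.Eventually.of_forall fun ω => ?_)
    show 2 * ((1 / 2) * (q ω * f (p ω / q ω) + p ω * f (q ω / p ω))) = _
    ring
  have hpa : Integrable (fun ω => (A + B) / 2 * (p ω + q ω)) μ := (hpi.add hqi).const_mul _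
  have hI := integral_mono (((hpi.add hqi).const_mul ((A + B) / 2)).add
    (hai.const_mul ((B - A) / 2))) hint2 key2
  have hL : ∫ ω, ((A + B) / 2 * (p ω + q ω) + (B - A) / 2 * |p ω - q ω|) ∂μ
      = (A + B) + (B - A) / 2 * T := by
    rw [integral_add hpa (hai.const_mul ((B - A) / 2)),
      integral_const_mul, integral_const_mul, integral_add hpi hqi, hpint, hqint]
    ring
  have hI2 : (A + B) + (B - A) / 2 * T
      ≤ ∫ ω, (q ω * f (p ω / q ω) + p ω * f (q ω / p ω)) ∂μ := by
    rw [← hL]; exact hI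
  have h3 : (B - A) * s ≤ (B - A) * ((1 / 2) * T) :=
    mul_le_mul_of_nonneg_left hsT (by linarith)
  have h4 : (1 - s) * A + (1 + s) * B = (1 - s) * f x + (1 + s) * f y := by
    rw [hA, hB]
    linear_combination (-a) * hxe - b * hye
  linarith
end

section
/- Let (Ω, μ) be a measure space and p, q : Ω → ℝ measurable with p(ω) > 0, q(ω) > 0 for all ω and ∫ p dμ = ∫ q dμ = 1, and suppose the triangular discrimination Δ = (1/2)∫ (p−q)²/(p+q) dμ is finite (the integrand is μ-integrable). Let X : Ω → ℝ be measurable with |X(ω)| ≤ M for all ω and X·p, X·q μ-integrable. Then |∫ X·p dμ − ∫ X·q dμ| ≤ 2M·√Δ. -/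
open MeasureTheory

theorem expectation_diff_le_sqrt_triangular {Ω : Type*} [MeasurableSpace Ω]
    (μ : Measure Ω)
    (p q X : Ω → ℝ) (hp : Measurable p) (hq : Measurable q) (hX : Measurable X)
    (hppos : ∀ ω, 0 < p ω) (hqpos : ∀ ω, 0 < q ω)
    (hpint : ∫ ω, p ω ∂μ = 1) (hqint : ∫ ω, q ω ∂μ = 1)
    (hΔint : Integrable (fun ω => (p ω - q ω) ^ 2 / (p ω + q ω)) μ)
    (M : ℝ) (hXM : ∀ ω, |X ω| ≤ M)
    (hXp : Integrable (fun ω => X ω * p ω) μ)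
    (hXq : Integrable (fun ω => X ω * q ω) μ) :
    |(∫ ω, X ω * p ω ∂μ) - ∫ ω, X ω * q ω ∂μ| ≤
      2 * M * Real.sqrt ((1 / 2) * ∫ ω, (p ω - q ω) ^ 2 / (p ω + q ω) ∂μ) := by
  have hpi : Integrable p μ := by
    by_contra h
    rw [integral_undef h] at hpint
    exact zero_ne_one hpint
  have hqi : Integrable q μ := by
    by_contra h
    rw [integral_undef h] at hqint
    exact zero_ne_one hqint
  have hM : 0 ≤ M := by
    rcases isEmpty_or_nonempty Ω with h | ⟨⟨ω⟩⟩
    · rw [Measure.eq_zero_of_isEmpty μ] at hpint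
      simp at hpint
    · exact (abs_nonneg _).trans (hXM ω)
  have habs : Integrable (fun ω => |p ω - q ω|) μ := (hpi.sub hqi).abs
  have h1 : |(∫ ω, X ω * p ω ∂μ) - ∫ ω, X ω * q ω ∂μ| ≤ M * ∫ ω, |p ω - q ω| ∂μ := by
    rw [← integral_sub hXp hXq, ← integral_const_mul]
    refine (abs_integral_le_integral_abs).trans ?_
    refine integral_mono (hXp.sub hXq).abs (habs.const_mul M) fun ω => ?_
    change |X ω * p ω - X ω * q ω| ≤ M * |p ω - q ω|
    rw [← mul_sub, abs_mul]
    exact mul_le_mul_of_nonneg_right (hXM ω) (abs_nonneg _)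
  have h2 : ∀ t : ℝ, 2 * t * ∫ ω, |p ω - q ω| ∂μ ≤
      t ^ 2 * 2 + ∫ ω, (p ω - q ω) ^ 2 / (p ω + q ω) ∂μ := by
    intro t
    have hs : Integrable (fun ω => t ^ 2 * (p ω + q ω)) μ := (hpi.add hqi).const_mul _
    have e : ∫ ω, t ^ 2 * (p ω + q ω) ∂μ = t ^ 2 * 2 := by
      rw [integral_const_mul, integral_add hpi hqi, hpint, hqint]
      norm_num
    rw [← e, ← integral_add hs hΔint, ← integral_const_mul]
    refine integral_mono (habs.const_mul _) (hs.add hΔint) fun ω => ?_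
    change 2 * t * |p ω - q ω| ≤ t ^ 2 * (p ω + q ω) + (p ω - q ω) ^ 2 / (p ω + q ω)
    have hpos : 0 < p ω + q ω := add_pos (hppos ω) (hqpos ω)
    have key : t ^ 2 * (p ω + q ω) + (p ω - q ω) ^ 2 / (p ω + q ω) - 2 * t * |p ω - q ω|
        = (t * (p ω + q ω) - |p ω - q ω|) ^ 2 / (p ω + q ω) := by
      rw [← sq_abs (p ω - q ω)]
      field_simp
      ring
    have : 0 ≤ (t * (p ω + q ω) - |p ω - q ω|) ^ 2 / (p ω + q ω) := by positivity
    linarith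
  refine h1.trans ?_
  rw [mul_comm 2 M, mul_assoc]
  refine mul_le_mul_of_nonneg_left ?_ hM
  have h3 := h2 ((∫ ω, |p ω - q ω| ∂μ) / 2)
  have h4 : (∫ ω, |p ω - q ω| ∂μ) / 2 ≤
      Real.sqrt ((1 / 2) * ∫ ω, (p ω - q ω) ^ 2 / (p ω + q ω) ∂μ) := by
    apply Real.le_sqrt_of_sq_le
    nlinarith
  linarith
end

section
/- Let f : ℝ → ℝ be twice continuously differentiable on (0,∞) with f''(x) > 0 for all x > 0 and f(1) = 0, and define d_f(s) = ((1-s)/2)·f((1+s)/(1-s)) + ((1+s)/2)·f((1-s)/(1+s)) for s ∈ [0,1). Then d_f(s)/s² tends to 2·f''(1) as s tends to 0 from the right: Tendsto (fun s => d_f(s)/s²) (𝓝[>] 0) (𝓝 (2·f''(1))). -/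
theorem binDiv_asymptotic (f : ℝ → ℝ)
    (hf : ContDiffOn ℝ 2 f (Set.Ioi 0))
    (hf'' : ∀ x : ℝ, 0 < x → 0 < deriv (deriv f) x)
    (hf1 : f 1 = 0) :
    Filter.Tendsto (fun s : ℝ => binDiv f s / s ^ 2)
      (nhdsWithin 0 (Set.Ioi 0)) (nhds (2 * deriv (deriv f) 1)) := by
  have h1 : (1 : ℝ) ∈ Set.Ioi (0 : ℝ) := by simp
  have hT := Real.taylor_tendsto (n := 2) (convex_Ioi (0 : ℝ)) h1 (by exact_mod_cast hf)
  rw [isOpen_Ioi.nhdsWithin_eq h1] at hT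
  have e2 : iteratedDerivWithin 2 f (Set.Ioi 0) 1 = deriv (deriv f) 1 := by
    rw [iteratedDerivWithin_of_isOpen isOpen_Ioi h1, iteratedDeriv_succ, iteratedDeriv_one]
  have e1 : iteratedDerivWithin 1 f (Set.Ioi 0) 1 = deriv f 1 := by
    rw [iteratedDerivWithin_of_isOpen isOpen_Ioi h1, iteratedDeriv_one]
  have hE : ∀ x, taylorWithinEval f 2 (Set.Ioi 0) 1 x
      = deriv f 1 * (x - 1) + deriv (deriv f) 1 / 2 * (x - 1) ^ 2 := by
    intro x
    rw [taylorWithinEval_succ, taylorWithinEval_succ, taylor_within_zero_eval]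
    simp only [zero_add, Nat.reduceAdd, e1, e2, hf1, smul_eq_mul]
    norm_num
    ring
  simp only [hE] at hT
  generalize deriv f 1 = a at hT
  generalize deriv (deriv f) 1 = b at hT ⊢
  set r : ℝ → ℝ := fun x => (f x - (a * (x - 1) + b / 2 * (x - 1) ^ 2)) / (x - 1) ^ 2 with hr
  have hfr : ∀ x, x ≠ 1 → f x = a * (x - 1) + b / 2 * (x - 1) ^ 2 + r x * (x - 1) ^ 2 := by
    intro x hx
    have : (x - 1) ^ 2 ≠ 0 := pow_ne_zero _ (sub_ne_zero.2 hx)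
    simp only [hr]
    rw [div_mul_cancel₀ _ this]
    ring
  have cx : Filter.Tendsto (fun s : ℝ => (1 + s) / (1 - s)) (nhds 0) (nhds 1) := by
    have : ContinuousAt (fun s : ℝ => (1 + s) / (1 - s)) 0 :=
      ContinuousAt.div (by fun_prop) (by fun_prop) (by norm_num)
    simpa [ContinuousAt] using this
  have cy : Filter.Tendsto (fun s : ℝ => (1 - s) / (1 + s)) (nhds 0) (nhds 1) := by
    have : ContinuousAt (fun s : ℝ => (1 - s) / (1 + s)) 0 :=
      ContinuousAt.div (by fun_prop) (by fun_prop) (by norm_num)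
    simpa [ContinuousAt] using this
  have m : Filter.Tendsto (fun s : ℝ => 1 - s) (nhds 0) (nhds 1) :=
    Continuous.tendsto' (by fun_prop) _ _ (by norm_num)
  have p : Filter.Tendsto (fun s : ℝ => 1 + s) (nhds 0) (nhds 1) :=
    Continuous.tendsto' (by fun_prop) _ _ (by norm_num)
  have hlim := ((((hT.comp cx).const_mul 2).const_add b).div m one_ne_zero).add
    ((((hT.comp cy).const_mul 2).const_add b).div p one_ne_zero)
  have hb : (b + 2 * 0) / 1 + (b + 2 * 0) / 1 = 2 * b := by ring
  rw [hb] at hlim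
  refine (hlim.mono_left nhdsWithin_le_nhds).congr' ?_
  filter_upwards [Ioo_mem_nhdsGT (zero_lt_one' ℝ)] with s hs
  obtain ⟨h0, hs1⟩ := hs
  have hm : 1 - s ≠ 0 := by linarith
  have hp : 1 + s ≠ 0 := by linarith
  have hs0 : s ≠ 0 := h0.ne'
  have hx : (1 + s) / (1 - s) ≠ 1 := by
    rw [Ne, div_eq_one_iff_eq hm]; intro h; linarith
  have hy : (1 - s) / (1 + s) ≠ 1 := by
    rw [Ne, div_eq_one_iff_eq hp]; intro h; linarith
  have ex : (1 + s) / (1 - s) - 1 = 2 * s / (1 - s) := by field_simp; ring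
  have ey : (1 - s) / (1 + s) - 1 = -(2 * s) / (1 + s) := by field_simp; ring
  simp only [binDiv]
  rw [hfr _ hx, hfr _ hy, ex, ey]
  change (b + 2 * r ((1 + s) / (1 - s))) / (1 - s) + (b + 2 * r ((1 - s) / (1 + s))) / (1 + s) = _
  generalize r ((1 + s) / (1 - s)) = u
  generalize r ((1 - s) / (1 + s)) = v
  field_simp
  ring
end
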